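/- arXiv:1411.4058 — 2 statements merged into one kernel-verified Lean document; each statement's English description precedes it below -/
import Mathlib

section
/- For integers k, ℓ with 0 < 2ℓ ≤ k and positive integers e_1,...,e_t, the ordered Ramsey number satisfies OR(P_{e_1}^{k,ℓ},...,P_{e_t}^{k,ℓ}) = (k−ℓ)·(e_1·e_2·...·e_t) + ℓ. -/
/-- An ordered hypergraph with vertex set `{1, …, n}` (with its natural order)
and edges given as finite sets of vertices. -/
structure OrderedHypergraph where
  n : ℕ
  edges : Finset (Finset ℕ)

/-- An ordered hypergraph `G` is contained in an ordered hypergraph `H` if there is an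
injective, order-preserving map from the vertices of `G` to the vertices of `H` such that
edges of `G` map to edges of `H`. -/
def OrderedHypergraph.Contains (H G : OrderedHypergraph) : Prop :=
  ∃ f : ℕ → ℕ, StrictMono f ∧ (∀ v ∈ Finset.Icc 1 G.n, f v ∈ Finset.Icc 1 H.n) ∧
    ∀ A ∈ G.edges, A.image f ∈ H.edges

/-- The complete `k`-uniform ordered hypergraph `K_N^k` on the vertex set `{1, …, N}`. -/
def completeHG (k N : ℕ) : OrderedHypergraph :=
  ⟨N, Finset.powersetCard k (Finset.Icc 1 N)⟩

/-- The `i`-colored subgraph of `K_N^k` under the coloring `c`. -/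
def coloredSubgraph (k N : ℕ) {t : ℕ} (c : Finset ℕ → Fin t) (i : Fin t) : OrderedHypergraph :=
  ⟨N, (Finset.powersetCard k (Finset.Icc 1 N)).filter fun A => c A = i⟩

/-- The ordered Ramsey number `OR(G 0, …, G (t-1))` of `k`-uniform ordered hypergraphs:
the minimum `N` such that every `t`-coloring of the edges of `K_N^k` contains, for some
color `i`, a copy of `G i` in the `i`-colored subgraph. -/
noncomputable def ORnum (k : ℕ) {t : ℕ} (G : Fin t → OrderedHypergraph) : ℕ :=
  sInf {N | ∀ c : Finset ℕ → Fin t, ∃ i, (coloredSubgraph k N c i).Contains (G i)}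

/-- The `(k,ℓ)`-path `P_e^{k,ℓ}` with `e` edges: the ordered `k`-uniform hypergraph on
vertex set `{1, …, e(k-ℓ)+ℓ}` with edges `A_r = {(r-1)(k-ℓ)+1, …, (r-1)(k-ℓ)+k}`. -/
def loosePath (k l e : ℕ) : OrderedHypergraph :=
  ⟨e * (k - l) + l,
    (Finset.range e).image fun r => Finset.Icc (r * (k - l) + 1) (r * (k - l) + k)⟩

/-!
Cut the vertices into consecutive blocks of `M = k - ℓ` vertices. Since `ℓ ≤ M`, the edges of a
`(k, ℓ)`-path become a block together with the first `ℓ` vertices of a later block, so colorings of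
edges correspond to colorings of pairs of blocks, and paths to monotone paths of blocks. For
monotone paths in a colored complete graph the threshold is `∏ e i`, as in the Erdős–Szekeres
theorem: label a vertex by the lengths of the longest monotone paths of each color that end there;
distinct vertices get distinct labels. Conversely, the mixed radix digits of the numbers below
`∏ e i` are labels from which a coloring without long monotone paths can be read off.
-/

section MonotonePaths

open Finset

variable {α ι : Type*}

/-- The color class `i` of a coloring of the pairs `u < v`, as a relation. A `RelSeries` in it is a
monochromatic monotone path, whose `length` counts edges. -/
def colorRel [LT α] (col : α → α → ι) (i : ι) : SetRel α α :=
  {x | x.1 < x.2 ∧ col x.1 x.2 = i}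

lemma strictMono_of_relSeries_colorRel [Preorder α] {col : α → α → ι} {i : ι}
    (p : RelSeries (colorRel col i)) : StrictMono p :=
  Fin.strictMono_iff_lt_succ.2 fun r => (p.step r).1

lemma exists_potential_of_forall_relSeries_length_ne (r : SetRel α α) (s : Set α) (n : ℕ)
    (h : ∀ p : RelSeries r, p.last ∈ s → p.length ≠ n) :
    ∃ L : α → ℕ, ∀ v ∈ s, L v < n ∧ ∀ u ∈ s, (u, v) ∈ r → L u < L v := by
  classical
  let HasWalk (v : α) (m : ℕ) : Prop := ∃ p : RelSeries r, p.last = v ∧ p.length = m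
  let L (v : α) : ℕ := Nat.findGreatest (HasWalk v) n
  have hasWalk_L (v : α) : HasWalk v (L v) :=
    Nat.findGreatest_spec (Nat.zero_le n) ⟨RelSeries.singleton r v, rfl, rfl⟩
  have L_lt {v : α} (hv : v ∈ s) : L v < n := by
    obtain ⟨p, rfl, hp⟩ := hasWalk_L v
    exact (Nat.findGreatest_le n).lt_of_ne fun hn => h p hv (hp.trans hn)
  refine ⟨L, fun v hv => ⟨L_lt hv, fun u hu huv => ?_⟩⟩
  obtain ⟨p, rfl, hp⟩ := hasWalk_L u
  exact Nat.le_findGreatest (L_lt hu) ⟨p.snoc v huv, p.last_snoc v huv, by simp [hp]⟩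

theorem exists_relSeries_length_eq_of_prod_lt_card [Fintype ι] (r : ι → SetRel α α) (e : ι → ℕ)
    (s : Finset α) (hr : (s : Set α).Pairwise fun u v => ∃ i, (u, v) ∈ r i ∨ (v, u) ∈ r i)
    (hs : ∏ i, e i < #s) : ∃ i, ∃ p : RelSeries (r i), p.last ∈ s ∧ p.length = e i := by
  classical
  by_contra! h
  choose L hL using fun i => exists_potential_of_forall_relSeries_length_ne (r i) s (e i) (h i)
  have maps : Set.MapsTo (fun v i => L i v) s (Fintype.piFinset fun i => range (e i)) :=
    fun v hv => by simpa using fun i => (hL i v hv).1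
  have inj : Set.InjOn (fun v i => L i v) (s : Set α) := by
    intro u hu v hv huv
    by_contra hne
    obtain ⟨i, hi | hi⟩ := hr hu hv hne
    · exact ((hL i v hv).2 u hu hi).ne (congrFun huv i)
    · exact ((hL i u hu).2 v hv hi).ne' (congrFun huv i)
  refine hs.not_ge ?_
  simpa using card_le_card_of_injOn _ maps inj

lemma exists_monochromatic_monotone_path [Fintype ι] (e : ι → ℕ) (col : ℕ → ℕ → ι) :
    ∃ i, ∃ p : RelSeries (colorRel col i), p.last ≤ ∏ i, e i ∧ p.length = e i := by
  simpa using exists_relSeries_length_eq_of_prod_lt_card (colorRel col) e (Iic (∏ i, e i))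
    (fun u _ v _ huv => huv.lt_or_gt.elim (fun h => ⟨_, .inl ⟨h, rfl⟩⟩)
      fun h => ⟨_, .inr ⟨h, rfl⟩⟩) (by simp)

lemma exists_finPiFinEquiv_symm_lt {t : ℕ} {e : Fin t → ℕ} {u v : Fin (∏ i, e i)} (h : u < v) :
    ∃ i, finPiFinEquiv.symm u i < finPiFinEquiv.symm v i := by
  by_contra! hle
  refine h.not_ge ?_
  rw [← finPiFinEquiv.apply_symm_apply u, ← finPiFinEquiv.apply_symm_apply v, Fin.le_def,
    finPiFinEquiv_apply, finPiFinEquiv_apply]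
  exact sum_le_sum fun i _ => Nat.mul_le_mul_right _ (hle i)

theorem exists_coloring_monotone_path_length_lt {t : ℕ} [NeZero t] (e : Fin t → ℕ) :
    ∃ col : ℕ → ℕ → Fin t, ∀ i, ∀ p : RelSeries (colorRel col i),
      p.last < ∏ i, e i → p.length < e i := by
  have exists_color (u v : ℕ) : ∃ i, ∀ (huv : u < v) (hv : v < ∏ i, e i),
      finPiFinEquiv.symm ⟨u, huv.trans hv⟩ i < finPiFinEquiv.symm ⟨v, hv⟩ i := by
    by_cases h : u < v ∧ v < ∏ i, e i
    · obtain ⟨i, hi⟩ := exists_finPiFinEquiv_symm_lt (u := ⟨u, h.1.trans h.2⟩) (v := ⟨v, h.2⟩) h.1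
      exact ⟨i, fun _ _ => hi⟩
    · exact ⟨0, fun huv hv => absurd ⟨huv, hv⟩ h⟩
  choose col hcol using exists_color
  refine ⟨col, fun i p hp => ?_⟩
  have lt_prod (r) : p r < ∏ i, e i :=
    ((strictMono_of_relSeries_colorRel p).monotone (Fin.le_last r)).trans_lt hp
  have digit_strictMono : StrictMono fun r => finPiFinEquiv.symm ⟨p r, lt_prod r⟩ i :=
    Fin.strictMono_iff_lt_succ.2 fun r => by
      obtain ⟨hlt, hi⟩ := p.step r
      have hdigit := hcol _ _ hlt (lt_prod r.succ)
      rwa [hi] at hdigit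
  simpa using Fintype.card_le_of_injective _ digit_strictMono.injective

end MonotonePaths

section BlowUp

open Finset

variable {M l : ℕ}

/-- The edge formed by the block `a` of `M` vertices and the first `l` vertices of the block `b`,
where the block `q` consists of `q * M + 1, …, q * M + M`. -/
def blockEdge (M l a b : ℕ) : Finset ℕ :=
  Icc (a * M + 1) (a * M + M) ∪ Icc (b * M + 1) (b * M + l)

lemma blockEdge_succ_right (M l r : ℕ) :
    blockEdge M l r (r + 1) = Icc (r * M + 1) (r * M + (M + l)) := by
  ext x
  simp only [blockEdge, add_one_mul, mem_union, mem_Icc]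
  omega

lemma card_blockEdge {a b : ℕ} (hab : a < b) : #(blockEdge M l a b) = M + l := by
  have hM : (a + 1) * M ≤ b * M := Nat.mul_le_mul_right M hab
  rw [blockEdge, card_union_of_disjoint]
  · simp
  · rw [disjoint_left]
    simp only [mem_Icc]
    lia

lemma blockEdge_subset_Icc {a b : ℕ} (hab : a < b) :
    blockEdge M l a b ⊆ Icc 1 (b * M + l) := by
  have hM : (a + 1) * M ≤ b * M := Nat.mul_le_mul_right M hab
  intro x
  simp only [blockEdge, mem_union, mem_Icc]
  lia

/-- The vertex map that moves the block `q` onto the block `p q`, preserving the positions of the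
vertices in their blocks. The number `0` is not a vertex; it is fixed so that the map is strictly
monotone on all of `ℕ`. -/
def blowUp (M : ℕ) (p : ℕ → ℕ) : ℕ → ℕ
  | 0 => 0
  | v + 1 => p (v / M) * M + v % M + 1

variable {p : ℕ → ℕ}

lemma blowUp_mul_add {s : ℕ} (q : ℕ) (hs : 1 ≤ s) (hsM : s ≤ M) :
    blowUp M p (q * M + s) = p q * M + s := by
  obtain ⟨s, rfl⟩ := Nat.exists_eq_add_of_le' hs
  have hdiv : (q * M + s) / M = q := Nat.div_eq_of_lt_le (by lia) (by lia)
  have hmod : (q * M + s) % M = s := Nat.mul_add_mod_of_lt hsM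
  rw [← add_assoc, blowUp, hdiv, hmod, add_assoc]

lemma blowUp_strictMono (hM : 0 < M) (hp : StrictMono p) : StrictMono (blowUp M p) := by
  refine strictMono_nat_of_lt_succ fun v => ?_
  obtain _ | v := v
  · exact Nat.succ_pos _
  have hmod : v % M < M := Nat.mod_lt v hM
  rcases (Nat.div_le_div_right (c := M) v.le_succ).eq_or_lt with hsame | hnext
  · have hv := Nat.div_add_mod' v M
    have hv' := Nat.div_add_mod' (v + 1) M
    simp only [Nat.succ_eq_add_one] at hsame
    simp only [blowUp, ← hsame] at hv' ⊢
    omega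
  · calc p (v / M) * M + v % M + 1 < (p (v / M) + 1) * M + 1 := by lia
      _ ≤ p ((v + 1) / M) * M + 1 := by gcongr; exact hp hnext
      _ ≤ p ((v + 1) / M) * M + (v + 1) % M + 1 := by gcongr; exact Nat.le_add_right _ _

lemma image_blowUp_Icc {s : ℕ} (q : ℕ) (hs : s ≤ M) :
    (Icc (q * M + 1) (q * M + s)).image (blowUp M p) = Icc (p q * M + 1) (p q * M + s) := by
  rw [← image_add_left_Icc, ← image_add_left_Icc, image_image]
  refine image_congr fun x hx => ?_
  obtain ⟨h1, hxs⟩ := mem_Icc.1 hx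
  exact blowUp_mul_add q h1 (hxs.trans hs)

lemma image_blowUp_blockEdge (hl : l ≤ M) (a b : ℕ) :
    (blockEdge M l a b).image (blowUp M p) = blockEdge M l (p a) (p b) := by
  rw [blockEdge, image_union, image_blowUp_Icc a le_rfl, image_blowUp_Icc b hl, blockEdge]

lemma OrderedHypergraph.contains_loosePath_of_blockEdge_mem {H : OrderedHypergraph} {e : ℕ}
    (hl : 1 ≤ l) (hlM : l ≤ M) (hp : StrictMono p) (hn : p e * M + l ≤ H.n)
    (hH : ∀ r < e, blockEdge M l (p r) (p (r + 1)) ∈ H.edges) :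
    H.Contains (loosePath (M + l) l e) := by
  have hmono := blowUp_strictMono (hl.trans hlM) hp
  refine ⟨blowUp M p, hmono, fun v hv => ?_, ?_⟩
  · obtain ⟨h1, hve⟩ : 1 ≤ v ∧ v ≤ e * M + l := by simpa [loosePath] using hv
    refine mem_Icc.2 ⟨h1.trans hmono.le_apply, ?_⟩
    calc blowUp M p v ≤ blowUp M p (e * M + l) := hmono.monotone hve
      _ = p e * M + l := blowUp_mul_add e hl hlM
      _ ≤ H.n := hn
  · simp only [loosePath, Nat.add_sub_cancel, forall_mem_image, mem_range]
    intro r hr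
    rw [← blockEdge_succ_right, image_blowUp_blockEdge hlM]
    exact hH r hr

lemma exists_strictMono_nat_extension {n : ℕ} {q : Fin (n + 1) → ℕ} (hq : StrictMono q) :
    ∃ p : ℕ → ℕ, StrictMono p ∧ ∀ r : Fin (n + 1), p r = q r := by
  refine ⟨fun r => if h : r < n + 1 then q ⟨r, h⟩ else q (Fin.last n) + r,
    strictMono_nat_of_lt_succ fun r => ?_, fun r => dif_pos r.2⟩
  split_ifs with hr hr' hr'
  · exact hq (Fin.mk_lt_mk.2 r.lt_succ_self)
  · have hle := hq.monotone (Fin.le_last ⟨r, hr⟩)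
    omega
  · omega
  · omega

theorem coloredSubgraph_contains_loosePath {N t : ℕ} {c : Finset ℕ → Fin t} {i : Fin t}
    (hl : 1 ≤ l) (hlM : l ≤ M) (q : RelSeries (colorRel (fun a b => c (blockEdge M l a b)) i))
    (hN : q.last * M + l ≤ N) :
    (coloredSubgraph (M + l) N c i).Contains (loosePath (M + l) l q.length) := by
  have hq := strictMono_of_relSeries_colorRel q
  obtain ⟨p, hp, hpq⟩ := exists_strictMono_nat_extension hq
  refine OrderedHypergraph.contains_loosePath_of_blockEdge_mem hl hlM hp ?_ fun r hr => ?_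
  · exact (hpq (Fin.last _)).symm ▸ hN
  · obtain ⟨hlt, hc⟩ := q.step ⟨r, hr⟩
    have hle : q (Fin.succ ⟨r, hr⟩) ≤ q.last := hq.monotone (Fin.le_last _)
    rw [show p r = q (Fin.castSucc ⟨r, hr⟩) from hpq (Fin.castSucc ⟨r, hr⟩),
      show p (r + 1) = q (Fin.succ ⟨r, hr⟩) from hpq (Fin.succ ⟨r, hr⟩)]
    refine mem_filter.2 ⟨mem_powersetCard.2 ⟨?_, card_blockEdge hlt⟩, hc⟩
    refine (blockEdge_subset_Icc hlt).trans (Icc_subset_Icc_right ?_)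
    exact le_trans (by gcongr) hN

end BlowUp

section BlockColoring

open Finset

variable {M l t : ℕ}

/-- The index `q` of the block `q * M + 1, …, q * M + M` containing `x`; only meaningful for
`1 ≤ x`. -/
def blockIndex (M x : ℕ) : ℕ :=
  (x - 1) / M

lemma blockIndex_lt_blockIndex {x y : ℕ} (hM : 0 < M) (hx : 1 ≤ x) (hxy : x + M ≤ y) :
    blockIndex M x < blockIndex M y := by
  calc (x - 1) / M < (x - 1 + M) / M := by rw [Nat.add_div_right _ hM]; exact Nat.lt_succ_self _
    _ ≤ (y - 1) / M := Nat.div_le_div_right (by omega)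

/-- The coloring of edges induced by a coloring of pairs of blocks: the blocks are those of the
vertices in positions `0` and `M` of the edge, which for an edge of a copy of a `(M + l, l)`-path
are the first vertex of the edge and the first vertex of the next one. -/
noncomputable def blockColoring (M : ℕ) (col : ℕ → ℕ → Fin t) (A : Finset ℕ) : Fin t :=
  col (blockIndex M (Nat.nth (· ∈ A) 0)) (blockIndex M (Nat.nth (· ∈ A) M))

lemma nth_mem_image_Icc {f : ℕ → ℕ} (hf : StrictMono f) {a b s : ℕ} (h : a + s ≤ b) :
    Nat.nth (· ∈ (Icc a b).image f) s = f (a + s) := by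
  have hbelow : {x ∈ range (f (a + s)) | x ∈ (Icc a b).image f} = (Ico a (a + s)).image f := by
    ext x
    simp only [mem_filter, mem_range, mem_image, mem_Icc, mem_Ico]
    constructor
    · rintro ⟨hlt, y, hy, rfl⟩
      exact ⟨y, ⟨hy.1, hf.lt_iff_lt.1 hlt⟩, rfl⟩
    · rintro ⟨y, hy, rfl⟩
      exact ⟨hf hy.2, y, ⟨hy.1, hy.2.le.trans h⟩, rfl⟩
  have hcount : Nat.count (· ∈ (Icc a b).image f) (f (a + s)) = s := by
    rw [Nat.count_eq_card_filter_range, hbelow, card_image_of_injective _ hf.injective,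
      Nat.card_Ico, Nat.add_sub_cancel_left]
  conv_lhs => rw [← hcount]
  exact Nat.nth_count (mem_image_of_mem f (mem_Icc.2 ⟨Nat.le_add_right a s, h⟩))

theorem exists_relSeries_of_contains_loosePath {N e : ℕ} {col : ℕ → ℕ → Fin t} {i : Fin t}
    (hM : 0 < M) (hl : 1 ≤ l)
    (h : (coloredSubgraph (M + l) N (blockColoring M col) i).Contains (loosePath (M + l) l e)) :
    ∃ q : RelSeries (colorRel col i), q.length = e ∧ q.last * M + l ≤ N := by
  obtain ⟨f, hf, hvert, hedge⟩ := h
  simp only [loosePath, coloredSubgraph, Nat.add_sub_cancel, forall_mem_image, mem_range,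
    mem_filter] at hvert hedge
  have f_pos (x : ℕ) : 1 ≤ f (x + 1) := (Nat.le_add_left 1 x).trans hf.le_apply
  have hstep (r : ℕ) (hr : r < e) : (blockIndex M (f (r * M + 1)),
      blockIndex M (f ((r + 1) * M + 1))) ∈ colorRel col i := by
    have hnext : M + (r * M + 1) = (r + 1) * M + 1 := by ring
    constructor
    · refine blockIndex_lt_blockIndex hM (f_pos _) ?_
      rw [← hnext, add_comm]
      exact hf.add_le_nat M (r * M + 1)
    · rw [← (hedge hr).2, blockColoring, nth_mem_image_Icc hf (by omega),
        nth_mem_image_Icc hf (by omega), ← hnext, add_zero, add_comm M]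
  refine ⟨⟨e, fun r => blockIndex M (f (r * M + 1)), fun r => hstep r r.2⟩, rfl, ?_⟩
  calc blockIndex M (f (e * M + 1)) * M + l ≤ f (e * M + 1) - 1 + l := by
        gcongr; exact Nat.div_mul_le_self _ _
    _ = (l - 1) + f (e * M + 1) := by have := f_pos (e * M); omega
    _ ≤ f (l - 1 + (e * M + 1)) := hf.add_le_nat _ _
    _ = f (e * M + l) := by congr 1; omega
    _ ≤ N := (mem_Icc.1 (hvert _ (mem_Icc.2 ⟨by omega, le_rfl⟩))).2

end BlockColoring

/-- For `0 < 2ℓ ≤ k` and positive integers `e 0, …, e (t-1)`,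
`OR(P_{e_1}^{k,ℓ}, …, P_{e_t}^{k,ℓ}) = (k-ℓ)·(e_1 ⋯ e_t) + ℓ`. -/
theorem ordered_ramsey_loose_paths_shallow (k l t : ℕ) (e : Fin t → ℕ)
    (ht : 1 ≤ t) (hl : 1 ≤ l) (hlk : 2 * l ≤ k) (he : ∀ j, 1 ≤ e j) :
    ORnum k (fun j => loosePath k l (e j)) = (k - l) * (∏ j, e j) + l := by
  obtain ⟨M, rfl⟩ : ∃ M, k = M + l := ⟨k - l, by omega⟩
  have hlM : l ≤ M := by omega
  have : NeZero t := ⟨by omega⟩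
  rw [Nat.add_sub_cancel]
  refine IsLeast.csInf_eq ⟨fun c => ?_, fun N hN => ?_⟩
  · obtain ⟨i, q, hlast, hlen⟩ :=
      exists_monochromatic_monotone_path e fun a b => c (blockEdge M l a b)
    rw [mul_comm M]
    exact ⟨i, by simpa only [hlen] using coloredSubgraph_contains_loosePath hl hlM q (by gcongr)⟩
  · obtain ⟨col, hcol⟩ := exists_coloring_monotone_path_length_lt e
    obtain ⟨i, hi⟩ := hN (blockColoring M col)
    obtain ⟨q, hlen, hlast⟩ := exists_relSeries_of_contains_loosePath (hl.trans hlM) hl hi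
    have hprod : ∏ j, e j ≤ q.last := not_lt.1 fun h => (hcol i q h).ne hlen
    calc M * ∏ j, e j + l ≤ M * q.last + l := by gcongr
      _ = q.last * M + l := by rw [mul_comm]
      _ ≤ N := hlast
end

section
/- Let p ≥ 2 and t ≥ 1, and let P be any ordered 2-uniform graph on p vertices whose underlying (unordered) graph is a path on p vertices. Then OR_t(P) ≤ 2^{((⌈lg p⌉+1)^{t−1}(⌈lg p⌉^2 − 1) + 1)/⌈lg p⌉}, where lg denotes the base-2 logarithm. -/
/-- `P` is an ordered 2-uniform graph on vertex set `{1, …, m}` whose underlying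
(unordered) graph is a path on `m` vertices: there is a relabeling `v` of `{1, …, m}`
so that the edges of `P` are exactly `{v j, v (j+1)}` for `j = 1, …, m-1`. -/
def IsOrderedPathGraph (P : OrderedHypergraph) (m : ℕ) : Prop :=
  P.n = m ∧ ∃ v : ℕ → ℕ, Set.BijOn v (Set.Icc 1 m) (Set.Icc 1 m) ∧
    P.edges = (Finset.Icc 1 (m - 1)).image fun j => {v j, v (j + 1)}

/-!
Split `S` into consecutive blocks, one for each vertex of the path. If every two disjoint `m`-sets
in `S` are joined by an edge, then following the path through the blocks always leaves at least `m`
possible endpoints, and since the blocks are ordered like the vertices of the path, any vertex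
sequence obtained this way is an ordered copy. Otherwise `S` contains two large sets with no edges
between them; recursing into both doubles the independent set that is found. Hence a large set
contains an ordered path in the last color or a large set avoiding that color, and colors are
eliminated one at a time.
-/

section Blocks

variable {ι V : Type*} [LinearOrder ι] [Fintype ι] [LinearOrder V]

theorem exists_orderEmbedding_mem {S : Finset V} (h : Fintype.card ι ≤ S.card) :
    ∃ f : ι ↪o V, ∀ i, f i ∈ S :=
  ⟨(Fintype.orderIsoFinOfCardEq ι rfl).symm.toOrderEmbedding.trans (S.orderEmbOfCardLe h),
    fun _ => S.orderEmbOfCardLe_mem h _⟩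

theorem exists_ordered_blocks {m : ℕ} {S : Finset V} (h : Fintype.card ι * m ≤ S.card) :
    ∃ B : ι → Finset V, (∀ i, B i ⊆ S) ∧ (∀ i, (B i).card = m) ∧
      ∀ i j, i < j → ∀ x ∈ B i, ∀ y ∈ B j, x < y := by
  obtain ⟨e, he⟩ : ∃ e : ι ×ₗ Fin m ↪o V, ∀ z, e z ∈ S :=
    exists_orderEmbedding_mem (by simpa [Fintype.card_lex] using h)
  have block_injective (i : ι) : Function.Injective fun k : Fin m => e (toLex (i, k)) :=
    fun _ _ hk => (Prod.mk.inj (toLex.injective (e.injective hk))).2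
  refine ⟨fun i => Finset.univ.map ⟨_, block_injective i⟩, fun i x hx => ?_, fun i => by simp,
    fun i j hij x hx y hy => ?_⟩
  · obtain ⟨k, -, rfl⟩ := Finset.mem_map.1 hx
    exact he _
  · obtain ⟨k, -, rfl⟩ := Finset.mem_map.1 hx
    obtain ⟨l, -, rfl⟩ := Finset.mem_map.1 hy
    exact e.strictMono (Prod.Lex.toLex_lt_toLex.2 (Or.inl hij))

end Blocks

section Bihole

variable {V : Type*}

/-- A bihole of size `m` of `G` inside `S`: two disjoint subsets of `S`, each with at least `m`
elements, with no edge of `G` between them. -/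
def HasBihole (G : SimpleGraph V) (S : Finset V) (m : ℕ) : Prop :=
  ∃ A ⊆ S, ∃ B ⊆ S, Disjoint A B ∧ m ≤ A.card ∧ m ≤ B.card ∧ ∀ a ∈ A, ∀ b ∈ B, ¬ G.Adj a b

theorem hasBihole_zero (G : SimpleGraph V) (S : Finset V) : HasBihole G S 0 :=
  ⟨∅, by simp, ∅, by simp, by simp⟩

variable {G : SimpleGraph V} {S : Finset V} {m : ℕ}

theorem exists_subset_adj_of_not_hasBihole (hG : ¬ HasBihole G S m) {C D : Finset V} (hC : C ⊆ S)
    (hD : D ⊆ S) (hCD : Disjoint C D) (hCm : 2 * m ≤ C.card) (hDm : m ≤ D.card) :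
    ∃ E ⊆ C, m ≤ E.card ∧ ∀ x ∈ E, ∃ y ∈ D, G.Adj x y := by
  classical
  refine ⟨C.filter fun x => ∃ y ∈ D, G.Adj x y, C.filter_subset _, ?_,
    fun x hx => (Finset.mem_filter.1 hx).2⟩
  by_contra! hlt
  have hcard := C.card_filter_add_card_filter_not fun x => ∃ y ∈ D, G.Adj x y
  refine hG ⟨C.filter fun x => ¬ ∃ y ∈ D, G.Adj x y, (C.filter_subset _).trans hC, D, hD,
    Finset.disjoint_of_subset_left (C.filter_subset _) hCD, by omega, hDm, fun x hx y hy hxy => ?_⟩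
  exact (Finset.mem_filter.1 hx).2 ⟨y, hy, hxy⟩

variable {ι : Type*} {B : ι → Finset V}

theorem exists_transversal_isChain_cons_of_not_hasBihole (hG : ¬ HasBihole G S m) (hm : 0 < m)
    (hBS : ∀ i, B i ⊆ S) (hB : Pairwise fun i j => Disjoint (B i) (B j))
    (hBm : ∀ i, 2 * m ≤ (B i).card) (i : ι) (l : List ι) (hl : (i :: l).Nodup) :
    ∃ D ⊆ B i, m ≤ D.card ∧ ∀ x ∈ D, ∃ f : ι → V,
      f i = x ∧ (∀ j, f j ∈ B j) ∧ ((i :: l).map f).IsChain G.Adj := by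
  classical
  induction l generalizing i with
  | nil =>
    choose g hg using fun j => Finset.card_pos.1 (show 0 < (B j).card by have := hBm j; omega)
    refine ⟨B i, subset_rfl, by have := hBm i; omega, fun x hx => ⟨Function.update g i x,
      Function.update_self .., fun j => ?_, List.isChain_singleton _⟩⟩
    rcases eq_or_ne j i with rfl | hj
    · rwa [Function.update_self]
    · rw [Function.update_of_ne hj]
      exact hg j
  | cons k l ih =>
    obtain ⟨hi, hkl⟩ := List.nodup_cons.1 hl
    obtain ⟨D, hDB, hDm, hD⟩ := ih k hkl
    have hik : i ≠ k := List.ne_of_not_mem_cons hi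
    obtain ⟨E, hEB, hEm, hE⟩ := exists_subset_adj_of_not_hasBihole hG (hBS i) (hDB.trans (hBS k))
      (Finset.disjoint_of_subset_right hDB (hB hik)) (hBm i) hDm
    refine ⟨E, hEB, hEm, fun x hx => ?_⟩
    obtain ⟨y, hy, hxy⟩ := hE x hx
    obtain ⟨f, rfl, hfB, hfl⟩ := hD y hy
    refine ⟨Function.update f i x, Function.update_self .., fun j => ?_, ?_⟩
    · rcases eq_or_ne j i with rfl | hj
      · rw [Function.update_self]
        exact hEB hx
      · rw [Function.update_of_ne hj]
        exact hfB j
    · have map_update : (k :: l).map (Function.update f i x) = (k :: l).map f :=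
        List.map_congr_left fun j hj => Function.update_of_ne (ne_of_mem_of_not_mem hj hi) x f
      rw [List.map_cons, map_update, Function.update_self]
      exact List.isChain_cons_cons.2 ⟨hxy, hfl⟩

end Bihole

section OrderedPath

variable {ι V κ : Type*} [LinearOrder ι] [LinearOrder V]

/-- The set `S` contains, in the graph `G`, an ordered copy of the path with ordered vertex set `ι`
that visits its vertices in the order of the list `l`. -/
def ContainsOrderedPath (G : SimpleGraph V) (S : Finset V) (l : List ι) : Prop :=
  ∃ f : ι ↪o V, (∀ i, f i ∈ S) ∧ (l.map f).IsChain G.Adj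

variable {G : SimpleGraph V} {S T : Finset V} {l : List ι}

theorem ContainsOrderedPath.mono (hST : S ⊆ T) (h : ContainsOrderedPath G S l) :
    ContainsOrderedPath G T l :=
  let ⟨f, hf, hl⟩ := h
  ⟨f, fun i => hST (hf i), hl⟩

variable [Fintype ι]

theorem containsOrderedPath_of_isClique (hl : l.Nodup) (hG : G.IsClique S)
    (hS : Fintype.card ι ≤ S.card) : ContainsOrderedPath G S l := by
  obtain ⟨f, hf⟩ := exists_orderEmbedding_mem (ι := ι) hS
  refine ⟨f, hf, (List.isChain_map f).2 (List.Pairwise.isChain (hl.imp fun hij => ?_))⟩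
  exact hG (hf _) (hf _) (f.injective.ne hij)

theorem containsOrderedPath_or_hasBihole {m : ℕ} (hl : l.Nodup)
    (hS : Fintype.card ι * (2 * m) ≤ S.card) : ContainsOrderedPath G S l ∨ HasBihole G S m := by
  rw [or_iff_not_imp_right]
  intro hG
  obtain ⟨B, hBS, hBm, hBlt⟩ := exists_ordered_blocks (ι := ι) hS
  have hm : 0 < m := Nat.pos_of_ne_zero fun h0 => hG (h0 ▸ hasBihole_zero G S)
  have disjoint_of_lt {i j : ι} (hij : i < j) : Disjoint (B i) (B j) :=
    Finset.disjoint_left.2 fun x hi hj => (hBlt i j hij x hi x hj).false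
  have hB : Pairwise fun i j => Disjoint (B i) (B j) := fun i j hij =>
    hij.lt_or_gt.elim disjoint_of_lt fun h => (disjoint_of_lt h).symm
  obtain _ | ⟨i, l⟩ := l
  · obtain ⟨f, hf⟩ := exists_orderEmbedding_mem (ι := ι) (S := S) (by nlinarith)
    exact ⟨f, hf, List.isChain_nil⟩
  obtain ⟨D, -, hDm, hD⟩ := exists_transversal_isChain_cons_of_not_hasBihole hG hm hBS hB
    (fun i => (hBm i).ge) i l hl
  obtain ⟨x, hx⟩ := Finset.card_pos.1 (hm.trans_le hDm)
  obtain ⟨f, -, hfB, hfl⟩ := hD x hx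
  have hf : StrictMono f := fun i j hij => hBlt i j hij _ (hfB i) _ (hfB j)
  exact ⟨OrderEmbedding.ofStrictMono f hf, fun i => hBS i (hfB i), hfl⟩

theorem containsOrderedPath_or_exists_isIndepSet (hl : l.Nodup) (s : ℕ)
    (hS : Fintype.card ι * (2 * Fintype.card ι) ^ s ≤ S.card) :
    ContainsOrderedPath G S l ∨ ∃ T ⊆ S, T.card = 2 ^ (s + 1) ∧ G.IsIndepSet T := by
  induction s generalizing S with
  | zero =>
    by_cases hG : G.IsClique S
    · exact Or.inl (containsOrderedPath_of_isClique hl hG (by simpa using hS))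
    · simp only [SimpleGraph.isClique_iff, Set.Pairwise, not_forall] at hG
      obtain ⟨a, ha, b, hb, hab, hadj⟩ := hG
      refine Or.inr ⟨{a, b}, Finset.insert_subset ha (Finset.singleton_subset_iff.2 hb),
        Finset.card_pair hab, ?_⟩
      rw [SimpleGraph.isIndepSet_iff, Finset.coe_pair, Set.pairwise_pair]
      exact fun _ => ⟨hadj, fun h => hadj h.symm⟩
  | succ s ih =>
    obtain h | ⟨A, hAS, B, hBS, hAB, hAm, hBm, hnadj⟩ :=
      containsOrderedPath_or_hasBihole (G := G) (S := S)
        (m := Fintype.card ι * (2 * Fintype.card ι) ^ s) hl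
        (le_of_eq_of_le (by ring) hS)
    · exact Or.inl h
    obtain h | ⟨T, hTA, hT, hTindep⟩ := ih hAm
    · exact Or.inl (h.mono hAS)
    obtain h | ⟨U, hUB, hU, hUindep⟩ := ih hBm
    · exact Or.inl (h.mono hBS)
    refine Or.inr ⟨T ∪ U, Finset.union_subset (hTA.trans hAS) (hUB.trans hBS), ?_, ?_⟩
    · rw [Finset.card_union_of_disjoint (Finset.disjoint_of_subset_left hTA
        (Finset.disjoint_of_subset_right hUB hAB)), hT, hU]
      ring
    · rw [SimpleGraph.isIndepSet_iff, Finset.coe_union, Set.pairwise_union]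
      exact ⟨hTindep, hUindep, fun a ha b hb _ => ⟨hnadj a (hTA ha) b (hUB hb),
        fun h => hnadj a (hTA ha) b (hUB hb) h.symm⟩⟩

/-- The exponent `e` such that `2 ^ e` vertices suffice for `t` colors and paths on at most `2 ^ L`
vertices. The recursion comes from `containsOrderedPath_or_exists_isIndepSet` with `s + 1` the
exponent for one color less, as `2 ^ L * (2 * 2 ^ L) ^ s = 2 ^ (L + (L + 1) * s)`. -/
def pathRamseyExponent (L : ℕ) : ℕ → ℕ
  | 0 => 1
  | t + 1 => L + (L + 1) * (pathRamseyExponent L t - 1)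

theorem pathRamseyExponent_pos {L : ℕ} (hL : 0 < L) : ∀ t, 0 < pathRamseyExponent L t
  | 0 => one_pos
  | _ + 1 => Nat.add_pos_left hL _

theorem pathRamseyExponent_eq {L : ℕ} (hL : 0 < L) (t : ℕ) :
    (pathRamseyExponent L t : ℝ) = (((L : ℝ) + 1) ^ t * (L - 1) + 1) / L := by
  have hL0 : (L : ℝ) ≠ 0 := by positivity
  induction t with
  | zero => simp [pathRamseyExponent, hL0]
  | succ t ih =>
    rw [pathRamseyExponent]
    push_cast [Nat.cast_sub (pathRamseyExponent_pos hL t)]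
    rw [ih]
    field_simp
    ring

theorem exists_containsOrderedPath {L : ℕ} (hL : Fintype.card ι ≤ 2 ^ L) (G : κ → SimpleGraph V)
    {l : κ → List ι} (hl : ∀ k, (l k).Nodup) (K : Finset κ)
    (hS : 2 ^ pathRamseyExponent L K.card ≤ S.card)
    (hcover : (S : Set V).Pairwise fun a b => ∃ k ∈ K, (G k).Adj a b) :
    ∃ k ∈ K, ContainsOrderedPath (G k) S (l k) := by
  induction K using Finset.cons_induction generalizing S with
  | empty =>
    obtain ⟨a, ha, b, hb, hab⟩ := Finset.one_lt_card.1 (lt_of_lt_of_le one_lt_two hS)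
    obtain ⟨k, hk, -⟩ := hcover ha hb hab
    exact absurd hk (Finset.notMem_empty k)
  | cons k K hk ih =>
    set s := pathRamseyExponent L K.card - 1 with hs
    have hcard : Fintype.card ι * (2 * Fintype.card ι) ^ s ≤ S.card :=
      calc Fintype.card ι * (2 * Fintype.card ι) ^ s ≤ 2 ^ L * (2 * 2 ^ L) ^ s := by gcongr
        _ = 2 ^ (L + (L + 1) * s) := by rw [← pow_succ', ← pow_mul, ← pow_add]
        _ ≤ S.card := by rwa [Finset.card_cons, pathRamseyExponent, ← hs] at hS
    obtain h | ⟨T, hTS, hT, hTindep⟩ :=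
      containsOrderedPath_or_exists_isIndepSet (G := G k) (hl k) s hcard
    · exact ⟨k, Finset.mem_cons_self k K, h⟩
    have hTcover : (T : Set V).Pairwise fun a b => ∃ j ∈ K, (G j).Adj a b := by
      intro a ha b hb hab
      obtain ⟨j, hj, hadj⟩ := hcover (hTS ha) (hTS hb) hab
      obtain rfl | hjK := Finset.mem_cons.1 hj
      · exact absurd hadj (hTindep ha hb hab)
      · exact ⟨j, hjK, hadj⟩
    have hTcard : 2 ^ pathRamseyExponent L K.card ≤ T.card :=
      hT ▸ Nat.pow_le_pow_right two_pos (by omega)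
    obtain ⟨j, hj, h⟩ := ih hTcard hTcover
    exact ⟨j, Finset.mem_cons_of_mem hj, h.mono hTS⟩

end OrderedPath

section Bridge

theorem exists_strictMono_extension_Icc {a b : ℕ} (hab : a ≤ b) {f : Set.Icc a b → ℕ}
    (hf : StrictMono f) (ha : a ≤ f ⟨a, Set.left_mem_Icc.2 hab⟩) :
    ∃ F : ℕ → ℕ, StrictMono F ∧ ∀ u : Set.Icc a b, F u = f u := by
  -- Continue `f` with slope one on both sides; `ha` keeps the subtraction from truncating.
  refine ⟨fun u => Set.IccExtend hab f u + (u - b) - (a - u), strictMono_nat_of_lt_succ fun u => ?_,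
    fun u => ?_⟩
  · rcases lt_or_ge u a with hua | hau
    · rw [Set.IccExtend_of_le_left hab f hua.le, Set.IccExtend_of_le_left hab f hua]
      omega
    rcases lt_or_ge u b with hub | hbu
    · have hlt : Set.IccExtend hab f u < Set.IccExtend hab f (u + 1) :=
        hf.strictMonoOn_IccExtend hab ⟨hau, hub.le⟩ ⟨by omega, hub⟩ u.lt_succ_self
      omega
    · rw [Set.IccExtend_of_right_le hab f hbu,
        Set.IccExtend_of_right_le hab f (hbu.trans u.le_succ)]
      omega
  · have hau : a ≤ u := u.2.1
    have hub : u ≤ b := u.2.2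
    simp only [Set.IccExtend_val]
    omega

/-- The graph of the pairs that the coloring `c` of finite sets gives the color `i`. -/
def colorGraph {V κ : Type*} [DecidableEq V] (c : Finset V → κ) (i : κ) : SimpleGraph V where
  Adj a b := a ≠ b ∧ c {a, b} = i
  symm := ⟨fun a b h => ⟨h.1.symm, by rw [Finset.pair_comm, h.2]⟩⟩
  loopless := ⟨fun _ h => h.1 rfl⟩

theorem pair_mem_edges_coloredSubgraph {N t : ℕ} {c : Finset ℕ → Fin t} {i : Fin t} {a b : ℕ}
    (ha : a ∈ Finset.Icc 1 N) (hb : b ∈ Finset.Icc 1 N) (hab : (colorGraph c i).Adj a b) :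
    {a, b} ∈ (coloredSubgraph 2 N c i).edges :=
  Finset.mem_filter.2 ⟨Finset.mem_powersetCard.2
    ⟨Finset.insert_subset ha (Finset.singleton_subset_iff.2 hb), Finset.card_pair hab.1⟩, hab.2⟩

variable {P : OrderedHypergraph} {p : ℕ}

theorem IsOrderedPathGraph.exists_nodup_list (hP : IsOrderedPathGraph P p) :
    ∃ l : List (Set.Icc 1 p), l.Nodup ∧
      ∀ A ∈ P.edges, ∃ j, ∃ h : j + 1 < l.length, A = {(l[j] : ℕ), (l[j + 1] : ℕ)} := by
  obtain ⟨-, v, hv, hE⟩ := hP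
  have mem_Icc (j : Fin p) : (j : ℕ) + 1 ∈ Set.Icc 1 p := ⟨by omega, j.2⟩
  refine ⟨List.ofFn fun j : Fin p => ⟨v (j + 1), hv.mapsTo (mem_Icc j)⟩,
    List.nodup_ofFn_ofInjective fun j k hjk => ?_, fun A hA => ?_⟩
  · have := hv.injOn (mem_Icc j) (mem_Icc k) (congrArg Subtype.val hjk)
    omega
  · rw [hE] at hA
    obtain ⟨j, hj, rfl⟩ := Finset.mem_image.1 hA
    obtain ⟨hj1, hjp⟩ := Finset.mem_Icc.1 hj
    refine ⟨j - 1, by rw [List.length_ofFn]; omega, ?_⟩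
    simp only [List.getElem_ofFn, Nat.sub_add_cancel hj1]

theorem contains_coloredSubgraph_of_containsOrderedPath {N t : ℕ} {c : Finset ℕ → Fin t}
    {i : Fin t} {l : List (Set.Icc 1 p)} (hp : 1 ≤ p) (hn : P.n = p)
    (hl : ∀ A ∈ P.edges, ∃ j, ∃ h : j + 1 < l.length, A = {(l[j] : ℕ), (l[j + 1] : ℕ)})
    (h : ContainsOrderedPath (colorGraph c i) (Finset.Icc 1 N) l) :
    (coloredSubgraph 2 N c i).Contains P := by
  obtain ⟨f, hf, hadj⟩ := h
  obtain ⟨F, hF, hFf⟩ := exists_strictMono_extension_Icc hp f.strictMono (Finset.mem_Icc.1 (hf _)).1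
  refine ⟨F, hF, fun u hu => ?_, fun A hA => ?_⟩
  · rw [hn, Finset.mem_Icc] at hu
    exact hFf ⟨u, hu⟩ ▸ hf _
  · obtain ⟨j, hj, rfl⟩ := hl A hA
    rw [Finset.image_insert, Finset.image_singleton, hFf, hFf]
    exact pair_mem_edges_coloredSubgraph (hf _) (hf _)
      (List.isChain_iff_getElem.1 ((List.isChain_map f).1 hadj) j hj)

end Bridge

theorem exists_coloredSubgraph_contains {p L t : ℕ} (hp : 1 ≤ p) (hL : p ≤ 2 ^ L)
    {P : Fin t → OrderedHypergraph} (hP : ∀ i, IsOrderedPathGraph (P i) p) (c : Finset ℕ → Fin t) :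
    ∃ i, (coloredSubgraph 2 (2 ^ pathRamseyExponent L t) c i).Contains (P i) := by
  choose l hl hE using fun i => (hP i).exists_nodup_list
  obtain ⟨i, -, h⟩ := exists_containsOrderedPath (S := Finset.Icc 1 (2 ^ pathRamseyExponent L t))
    (by simpa using hL) (colorGraph c) hl Finset.univ (by simp)
    fun a _ b _ hab => ⟨c {a, b}, Finset.mem_univ _, hab, rfl⟩
  exact ⟨i, contains_coloredSubgraph_of_containsOrderedPath hp (hP i).1 (hE i) h⟩

theorem ordered_ramsey_arbitrary_path_general (p t : ℕ) (hp : 2 ≤ p) (ht : 1 ≤ t)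
    (P : Fin t → OrderedHypergraph) (hP : ∀ i, IsOrderedPathGraph (P i) p) :
    (ORnum 2 P : ℝ) ≤
      (2 : ℝ) ^ ((((Nat.clog 2 p : ℝ) + 1) ^ (t - 1) * ((Nat.clog 2 p : ℝ) ^ 2 - 1) + 1)
        / (Nat.clog 2 p : ℝ)) := by
  set L := Nat.clog 2 p
  have hL : p ≤ 2 ^ L := Nat.le_pow_clog one_lt_two p
  have hOR : ORnum 2 P ≤ 2 ^ pathRamseyExponent L t :=
    Nat.sInf_le (exists_coloredSubgraph_contains (by omega) hL hP)
  have hexp : (pathRamseyExponent L t : ℝ) =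
      (((L : ℝ) + 1) ^ (t - 1) * ((L : ℝ) ^ 2 - 1) + 1) / L := by
    obtain ⟨k, rfl⟩ := Nat.exists_eq_add_of_le' ht
    rw [pathRamseyExponent_eq (Nat.clog_pos one_lt_two hp), Nat.add_sub_cancel]
    ring
  rw [← hexp, Real.rpow_natCast]
  exact_mod_cast hOR

/-- For `p ≥ 2`, `t ≥ 1`, and `P` any ordered 2-uniform path on `p`
vertices, `OR_t(P) ≤ 2^{((⌈lg p⌉+1)^{t-1}(⌈lg p⌉² - 1) + 1)/⌈lg p⌉}`, where
`⌈lg p⌉ = Nat.clog 2 p` is the ceiling of the base-2 logarithm of `p`. -/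
theorem ordered_ramsey_arbitrary_path (p t : ℕ) (hp : 2 ≤ p) (ht : 1 ≤ t)
    (P : OrderedHypergraph) (hP : IsOrderedPathGraph P p) :
    (ORnum 2 (fun _ : Fin t => P) : ℝ) ≤
      (2 : ℝ) ^ ((((Nat.clog 2 p : ℝ) + 1) ^ (t - 1) * ((Nat.clog 2 p : ℝ) ^ 2 - 1) + 1)
        / (Nat.clog 2 p : ℝ)) :=
  ordered_ramsey_arbitrary_path_general p t hp ht (fun _ => P) fun _ => hP
end
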